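/- arXiv:2211.05856 — 2 statements merged into one kernel-verified Lean document; each statement's English description precedes it below -/
import Mathlib

section
/- Let a < b be real numbers, Z a topological space, Y ⊆ Z × [a,b] a subspace with increasing fibers, and p : Y → [a,b] the restriction of the projection. Let s be a section of p and write s(a) = (z_a, a). Then the constant section s' defined by s'(c) = (z_a, c) is a well-defined continuous section of p, and s is homotopic through sections to s'. -/
open Set

/-!
If a section `s` takes the value `(z, d)` at `d`, increasing fibers allow the point `z` to be used
over every `c ≥ d`. A homotopy `H` from the identity of the base that only moves points down
therefore deforms `s` through the sections `c ↦ (z-coordinate of s (H t c), c)`. On `[a, b]`, such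
a homotopy to the constant map at `a` is `c ↦ min c (γ t)` for a path `γ` from `b` to `a`.
-/

section IncreasingFibers

variable {X Z B : Type*} [Preorder B] {Y : Set (Z × B)} {s : B → Y} {f g : X → B}

/-- A subset of a product over an ordered base has increasing fibers if a point `z` lying over
some `c` also lies over every larger point of the base. -/
def HasIncreasingFibers (Y : Set (Z × B)) : Prop :=
  ∀ z, IsUpperSet (Prod.mk z ⁻¹' Y)

namespace HasIncreasingFibers

theorem mk_fst_mem_of_le (hY : HasIncreasingFibers Y) (hsec : ∀ c, (s c).1.2 = c) {d c : B}
    (hdc : d ≤ c) : ((s d).1.1, c) ∈ Y := by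
  have hd : (s d).1 = ((s d).1.1, d) := Prod.ext rfl (hsec d)
  exact hY _ hdc (hd ▸ (s d).2 : ((s d).1.1, d) ∈ Y)

/-- The section `s` evaluated along `f` and then moved up, with the same coordinate in `Z`, to lie
over `g ≥ f`. -/
def push (hY : HasIncreasingFibers Y) (hsec : ∀ c, (s c).1.2 = c) (hfg : ∀ x, f x ≤ g x) (x : X) :
    Y :=
  ⟨((s (f x)).1.1, g x), hY.mk_fst_mem_of_le hsec (hfg x)⟩

theorem push_eq_of_eq (hY : HasIncreasingFibers Y) (hsec : ∀ c, (s c).1.2 = c)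
    (hfg : ∀ x, f x ≤ g x) {x : X} (hx : f x = g x) : hY.push hsec hfg x = s (g x) :=
  Subtype.ext <| Prod.ext (by simp only [push, hx]) (hsec _).symm

theorem continuous_push [TopologicalSpace X] [TopologicalSpace Z] [TopologicalSpace B]
    (hY : HasIncreasingFibers Y) (hsec : ∀ c, (s c).1.2 = c) (hfg : ∀ x, f x ≤ g x)
    (hs : Continuous s) (hf : Continuous f) (hg : Continuous g) :
    Continuous (hY.push hsec hfg) := by
  unfold push
  fun_prop

end HasIncreasingFibers

end IncreasingFibers

/-- The deformation `c ↦ c ⊓ γ t` of a bounded topological meet-semilattice onto its bottom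
element, along a path `γ` from `⊤` to `⊥`. -/
def infHomotopy {B : Type*} [TopologicalSpace B] [SemilatticeInf B] [BoundedOrder B]
    [ContinuousInf B] (γ : Path (⊤ : B) ⊥) :
    (ContinuousMap.id B).Homotopy (ContinuousMap.const B ⊥) where
  toFun x := x.2 ⊓ γ x.1
  continuous_toFun := by fun_prop
  map_zero_left c := by simp
  map_one_left c := by simp

theorem exists_homotopy_id_const_left_le {a b : ℝ} (hab : a ≤ b) :
    ∃ H : (ContinuousMap.id (Icc a b)).Homotopy (.const _ ⟨a, left_mem_Icc.mpr hab⟩),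
      ∀ t c, H (t, c) ≤ c := by
  have : Fact (a ≤ b) := ⟨hab⟩
  have : PathConnectedSpace (Icc a b) := isPathConnected_iff_pathConnectedSpace.mp <|
    (convex_Icc a b).isPathConnected (nonempty_Icc.mpr hab)
  exact ⟨infHomotopy (PathConnectedSpace.somePath ⊤ ⊥), fun _ _ ↦ inf_le_left⟩

theorem stmt7_general {Z B : Type*} [TopologicalSpace Z] [TopologicalSpace B] [Preorder B]
    {Y : Set (Z × B)} (hY : HasIncreasingFibers Y) {s : B → Y} (hs : Continuous s)
    (hsec : ∀ c, (s c).1.2 = c) {g : C(B, B)} (H : (ContinuousMap.id B).Homotopy g)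
    (hH : ∀ t c, H (t, c) ≤ c) :
    ∃ s' : B → Y, Continuous s' ∧
      (∀ c, (s' c).1 = ((s (g c)).1.1, c)) ∧
      (∀ c, (s' c).1.2 = c) ∧
      ∃ F : B × unitInterval → Y, Continuous F ∧
        (∀ c, F (c, 0) = s c) ∧
        (∀ c, F (c, 1) = s' c) ∧
        (∀ c t, (F (c, t)).1.2 = c) := by
  let F : B × unitInterval → Y := hY.push hsec (fun x ↦ hH x.2 x.1)
  have hF : Continuous F := hY.continuous_push hsec _ hs (by fun_prop) continuous_fst
  have hF_zero (c : B) : F (c, 0) = s c := hY.push_eq_of_eq hsec _ (H.apply_zero c)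
  have hF_one (c : B) : (F (c, 1)).1 = ((s (g c)).1.1, c) := by
    simp only [F, HasIncreasingFibers.push, H.apply_one]
  exact ⟨fun c ↦ F (c, 1), by fun_prop, hF_one, fun _ ↦ rfl,
    F, hF, hF_zero, fun _ ↦ rfl, fun _ _ ↦ rfl⟩

/-- For a subspace `Y ⊆ Z × [a,b]` with increasing fibers and `p : Y → [a,b]` the
projection, every section `s` with `s a = (z_a, a)` is homotopic through sections to the
constant section `s' c = (z_a, c)`, which is well defined and continuous. -/
theorem stmt7 {Z : Type*} [TopologicalSpace Z] (a b : ℝ) (hab : a < b)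
    (Y : Set (Z × Set.Icc a b))
    (hY : ∀ (z : Z) (c c' : Set.Icc a b), (z, c) ∈ Y → c ≤ c' → (z, c') ∈ Y)
    (s : Set.Icc a b → Y)
    (hs : Continuous s) (hssec : ∀ c, (s c).1.2 = c) :
    ∃ s' : Set.Icc a b → Y, Continuous s' ∧
      (∀ c, (s' c).1 = ((s ⟨a, Set.left_mem_Icc.mpr hab.le⟩).1.1, c)) ∧
      (∀ c, (s' c).1.2 = c) ∧
      ∃ F : Set.Icc a b × unitInterval → Y, Continuous F ∧
        (∀ c, F (c, 0) = s c) ∧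
        (∀ c, F (c, 1) = s' c) ∧
        (∀ c t, (F (c, t)).1.2 = c) := by
  obtain ⟨H, hH⟩ := exists_homotopy_id_const_left_le hab.le
  exact stmt7_general (fun z c c' hcc' hc ↦ hY z c c' hc hcc') hs hssec H hH
end

section
/- Let a < b be real numbers, Z a topological space, Y ⊆ Z × [a,b] a subspace, and p : Y → [a,b] the restriction of the projection. For c ∈ [a,b] write Y_c = {z ∈ Z : (z,c) ∈ Y}. Let t₀ ∈ (a,b), and suppose there are subsets A, B ⊆ Z such that either (i) A ⊆ B, Y_c = A for all c ∈ [a,t₀) and Y_c = B for all c ∈ [t₀,b], or (ii) B ⊆ A, Y_c = A for all c ∈ [a,t₀] and Y_c = B for all c ∈ (t₀,b] (the local structure of a stacked simplicial complex near a single transition time). Then p is 0-sectional: every relative path is homotopic through relative paths to s ∘ ℓ for some section s of p, and any two sections s₀, s₁ of p such that s₀ ∘ ℓ and s₁ ∘ ℓ are homotopic through relative paths are homotopic through sections. -/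
open Set unitInterval

/-- The affine homeomorphism `[0,1] → [a,b]`, `u ↦ a + u (b - a)`. -/
noncomputable def ell (a b : ℝ) (hab : a ≤ b) : I → Set.Icc a b :=
  fun u => ⟨a + (u : ℝ) * (b - a), by
    constructor
    · nlinarith [u.2.1, u.2.2]
    · nlinarith [u.2.1, u.2.2]⟩

/-!
Suppose first that the fibers increase. Then a relative path or a section can be shrunk, along its
own parameter, to its starting point over the least element of the base: each intermediate point
stays admissible when it is raised to a greater height. So every relative path and every section is
homotopic to a section with constant first component. A homotopy between relative paths traces, at
their starting points, a path in the lowest fiber, and this path joins the two constant sections.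
Decreasing fibers become increasing when the order of the base and the direction of the paths are
reversed.
-/

open ContinuousMap

/-- The fiber `Y_c` of `Y ⊆ Z × C` over `c`, as a subset of `Z`. -/
def fiber {Z C : Type*} (Y : Set (Z × C)) (c : C) : Set Z :=
  {z | (z, c) ∈ Y}

section

variable {Z C : Type*} [TopologicalSpace Z] [TopologicalSpace C] {x y : C} {Y : Set (Z × C)}

/-- A section of the projection `Y → C`. -/
def IsSection (s : C(C, Y)) : Prop :=
  ∀ c, (s c).1.2 = c

/-- A relative path of the projection `Y → C` with respect to base points `x` and `y` of `C`: only
the fibers containing its endpoints are prescribed. -/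
def IsRelativePath (x y : C) (γ : C(I, Y)) : Prop :=
  (γ 0).1.2 = x ∧ (γ 1).1.2 = y

/-- The projection `Y → C` is 0-sectional relative to the path `ℓ` in the base: composition with `ℓ`
is a bijection from sections up to homotopy through sections to relative paths up to homotopy
through relative paths. Homotopies through maps of a given kind are encoded by `HomotopicWith`. -/
def IsZeroSectional (ℓ : Path x y) (Y : Set (Z × C)) : Prop :=
  (∀ γ : C(I, Y), IsRelativePath x y γ →
    ∃ s : C(C, Y), IsSection s ∧ HomotopicWith γ (s.comp ℓ) (IsRelativePath x y)) ∧
  ∀ s₀ s₁ : C(C, Y), IsSection s₀ → IsSection s₁ →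
    HomotopicWith (s₀.comp ℓ) (s₁.comp ℓ) (IsRelativePath x y) → HomotopicWith s₀ s₁ IsSection

lemma homotopicWith_iff_exists_prod_unitInterval {X W : Type*} [TopologicalSpace X]
    [TopologicalSpace W] {f g : C(X, W)} {P : C(X, W) → Prop} :
    HomotopicWith f g P ↔ ∃ H : C(X × I, W), (∀ u, H (u, 0) = f u) ∧ (∀ u, H (u, 1) = g u) ∧
      ∀ t, P ⟨fun u => H (u, t), by fun_prop⟩ := by
  constructor
  · rintro ⟨F⟩
    exact ⟨F.toContinuousMap.comp .prodSwap, F.apply_zero, F.apply_one, F.prop⟩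
  · rintro ⟨H, h0, h1, hP⟩
    exact ⟨⟨⟨H.comp .prodSwap, h0, h1⟩, hP⟩⟩

lemma homotopicWith_isRelativePath_comp_symm {γ₀ γ₁ : C(I, Y)}
    (h : HomotopicWith γ₀ γ₁ (IsRelativePath x y)) :
    HomotopicWith (γ₀.comp ⟨σ, continuous_symm⟩) (γ₁.comp ⟨σ, continuous_symm⟩)
      (IsRelativePath y x) := by
  obtain ⟨F⟩ := h
  exact ⟨⟨F.toHomotopy.compContinuousMap _, fun t =>
    ⟨by simpa using (F.prop t).2, by simpa using (F.prop t).1⟩⟩⟩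

lemma IsZeroSectional.of_symm {ℓ : Path x y} (h : IsZeroSectional ℓ.symm Y) :
    IsZeroSectional ℓ Y := by
  constructor
  · intro γ hγ
    obtain ⟨s, hs, hγs⟩ := h.1 (γ.comp ⟨σ, continuous_symm⟩)
      ⟨by simpa using hγ.2, by simpa using hγ.1⟩
    refine ⟨s, hs, ?_⟩
    convert homotopicWith_isRelativePath_comp_symm hγs using 1 <;> ext u <;> simp
  · intro s₀ s₁ hs₀ hs₁ hG
    exact h.2 s₀ s₁ hs₀ hs₁ (homotopicWith_isRelativePath_comp_symm hG)

end

section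

variable {Z C X : Type*} [TopologicalSpace Z] [TopologicalSpace C] [TopologicalSpace X]
  [Preorder C] {Y : Set (Z × C)}

/-- The map `f : X → Y` with its height, its second component, raised to `g`. -/
def raise (hY : Monotone (fiber Y)) (f : C(X, Y)) (g : C(X, C)) (hfg : ∀ u, (f u).1.2 ≤ g u) :
    C(X, Y) where
  toFun u := ⟨((f u).1.1, g u), hY (hfg u) (f u).2⟩
  continuous_toFun := by fun_prop

/-- The section `c ↦ (z, c)` through a point `v = (z, x)` over the least element `x` of `C`; it
exists because the fibers increase. -/
def constSection (hY : Monotone (fiber Y)) (v : Y) (hv : IsBot v.1.2) : C(C, Y) :=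
  raise hY (.const C v) (.id C) hv

lemma isSection_constSection (hY : Monotone (fiber Y)) (v : Y) (hv : IsBot v.1.2) :
    IsSection (constSection hY v hv) := fun _ => rfl

lemma homotopicWith_constSection_of_path (hY : Monotone (fiber Y)) {v w : Y} (p : Path v w)
    (hp : ∀ t, IsBot (p t).1.2) (hv : IsBot v.1.2) (hw : IsBot w.1.2) :
    HomotopicWith (constSection hY v hv) (constSection hY w hw) IsSection :=
  homotopicWith_iff_exists_prod_unitInterval.2
    ⟨raise hY ((p : C(I, Y)).comp .snd) .fst fun q => hp q.2 q.1,
      fun _ => by simp [raise, constSection], fun _ => by simp [raise, constSection],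
      fun _ _ => rfl⟩

end

section

variable {Z C : Type*} [TopologicalSpace Z] [TopologicalSpace C] [SemilatticeInf C]
  [ContinuousInf C] {x y : C} {Y : Set (Z × C)}

lemma IsSection.homotopicWith_constSection (hY : Monotone (fiber Y)) (hy : IsTop y) (ℓ : Path x y)
    {s : C(C, Y)} (hs : IsSection s) (hx : IsBot (s x).1.2) :
    HomotopicWith s (constSection hY (s x) hx) IsSection := by
  let f : C(C × I, Y) := s.comp ⟨fun q => q.1 ⊓ ℓ (σ q.2), by fun_prop⟩
  refine homotopicWith_iff_exists_prod_unitInterval.2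
    ⟨raise hY f .fst fun q => (hs _).trans_le inf_le_left, fun c => ?_, fun c => ?_, fun _ _ => rfl⟩
  · have : c ⊓ y = c := inf_eq_left.2 (hy c)
    ext <;> simp [raise, f, this, hs c]
  · have : c ⊓ x = x := inf_eq_right.2 (hs x ▸ hx c)
    ext <;> simp [raise, constSection, f, this]

end

section

variable {Z C : Type*} [TopologicalSpace Z] [TopologicalSpace C] [Lattice C] [TopologicalLattice C]
  {x y : C} {Y : Set (Z × C)}

lemma IsRelativePath.homotopicWith_constSection_comp (hY : Monotone (fiber Y)) (hy : IsTop y)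
    (ℓ : Path x y) {γ : C(I, Y)} (hγ : IsRelativePath x y γ) (hγ0 : IsBot (γ 0).1.2) :
    HomotopicWith γ ((constSection hY (γ 0) hγ0).comp ℓ) (IsRelativePath x y) := by
  let f : C(I × I, Y) := γ.comp ⟨fun q => q.1 * σ q.2, by fun_prop⟩
  -- `g` is the height of `γ` at time `0` and `ℓ` at time `1`. The meet, which is `y` at the right
  -- end of the path, keeps that end over `y`, from where `f` departs.
  let g : C(I × I, C) :=
    ⟨fun q => (f q).1.2 ⊔ ℓ q.1 ⊓ ((γ q.1).1.2 ⊔ ℓ q.2), by fun_prop⟩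
  refine homotopicWith_iff_exists_prod_unitInterval.2
    ⟨raise hY f g fun _ => le_sup_left, fun u => ?_, fun u => ?_, fun t => ⟨?_, ?_⟩⟩
  · have : (γ u).1.2 ⊔ x = (γ u).1.2 := sup_eq_left.2 (hγ.1 ▸ hγ0 _)
    ext <;> simp [raise, f, g, this]
  · have h0 : (γ 0).1.2 ⊔ ℓ u = ℓ u := sup_eq_right.2 (hγ0 _)
    have h1 : ℓ u ≤ (γ u).1.2 ⊔ y := (hy _).trans le_sup_right
    ext <;> simp [raise, constSection, f, g, h0, h1]
  · simp [raise, f, g, hγ.1]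
  · have : (γ (σ t)).1.2 ≤ y := hy _
    simp [raise, f, g, hγ.2, this]

lemma isZeroSectional_of_monotone (hY : Monotone (fiber Y)) (hx : IsBot x) (hy : IsTop y)
    (ℓ : Path x y) : IsZeroSectional ℓ Y := by
  constructor
  · intro γ hγ
    have hγ0 : IsBot (γ 0).1.2 := hγ.1 ▸ hx
    exact ⟨_, isSection_constSection hY _ hγ0, hγ.homotopicWith_constSection_comp hY hy ℓ hγ0⟩
  · rintro s₀ s₁ hs₀ hs₁ ⟨G⟩
    have hx₀ : IsBot (s₀ x).1.2 := (hs₀ x).symm ▸ hx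
    have hx₁ : IsBot (s₁ x).1.2 := (hs₁ x).symm ▸ hx
    let p : Path (s₀ x) (s₁ x) := (G.evalAt 0).cast (by simp) (by simp)
    have hp (t : I) : IsBot (p t).1.2 := (G.prop t).1.symm ▸ hx
    exact ((hs₀.homotopicWith_constSection hY hy ℓ hx₀).trans
      (homotopicWith_constSection_of_path hY p hp hx₀ hx₁)).trans
      (hs₁.homotopicWith_constSection hY hy ℓ hx₁).symm

end

section

variable {α β 𝕜 : Type*} [Preorder α] [Preorder β] {f : α → β}

lemma monotone_of_eqOn_isLowerSet {L : Set α} (hL : IsLowerSet L) {A B : β}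
    (hA : ∀ c ∈ L, f c = A) (hB : ∀ c ∉ L, f c = B) (hAB : A ≤ B) : Monotone f := by
  intro c d hcd
  by_cases hd : d ∈ L
  · rw [hA c (hL hcd hd), hA d hd]
  · rw [hB d hd]
    by_cases hc : c ∈ L
    · rwa [hA c hc]
    · rw [hB c hc]

lemma monotone_or_antitone_of_jump [LinearOrder 𝕜] {k : α → 𝕜} (hk : Monotone k) {t₀ : 𝕜}
    (hf : ∃ A B : β,
      (A ≤ B ∧ (∀ c, k c < t₀ → f c = A) ∧ ∀ c, t₀ ≤ k c → f c = B) ∨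
      (B ≤ A ∧ (∀ c, k c ≤ t₀ → f c = A) ∧ ∀ c, t₀ < k c → f c = B)) :
    Monotone f ∨ Antitone f := by
  obtain ⟨A, B, ⟨hAB, hA, hB⟩ | ⟨hBA, hA, hB⟩⟩ := hf
  · exact .inl <| monotone_of_eqOn_isLowerSet ((isLowerSet_Iio t₀).preimage hk) hA
      (fun c hc => hB c (not_lt.1 hc)) hAB
  · exact .inr <| monotone_of_eqOn_isLowerSet (β := βᵒᵈ) ((isLowerSet_Iic t₀).preimage hk) hA
      (fun c hc => hB c (not_le.1 hc)) hBA

end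

section

variable {Z : Type*} [TopologicalSpace Z] {a b : ℝ} {Y : Set (Z × Icc a b)}

/-- The map `ell` as a path in `[a,b]` from `a` to `b`. -/
noncomputable def ellPath (hab : a ≤ b) :
    Path (⟨a, left_mem_Icc.2 hab⟩ : Icc a b) ⟨b, right_mem_Icc.2 hab⟩ where
  toFun := ell a b hab
  continuous_toFun := by unfold ell; fun_prop
  source' := Subtype.ext (by simp [ell])
  target' := Subtype.ext (by simp [ell])

lemma isRelativePath_Icc_iff (hab : a ≤ b) {γ : C(I, Y)} :
    IsRelativePath (⟨a, left_mem_Icc.2 hab⟩ : Icc a b) ⟨b, right_mem_Icc.2 hab⟩ γ ↔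
      ((γ 0).1.2 : ℝ) = a ∧ ((γ 1).1.2 : ℝ) = b :=
  and_congr Subtype.ext_iff Subtype.ext_iff

lemma isZeroSectional_ellPath_iff (hab : a ≤ b) :
    IsZeroSectional (ellPath hab) Y ↔
      (∀ γ : I → Y, Continuous γ → ((γ 0).1.2 : ℝ) = a → ((γ 1).1.2 : ℝ) = b →
        ∃ s : Icc a b → Y, Continuous s ∧ (∀ c, (s c).1.2 = c) ∧
          ∃ H : I × I → Y, Continuous H ∧
            (∀ u, H (u, 0) = γ u) ∧
            (∀ u, H (u, 1) = s (ell a b hab u)) ∧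
            (∀ t, ((H (0, t)).1.2 : ℝ) = a) ∧
            (∀ t, ((H (1, t)).1.2 : ℝ) = b)) ∧
      (∀ s₀ s₁ : Icc a b → Y,
        Continuous s₀ → (∀ c, (s₀ c).1.2 = c) →
        Continuous s₁ → (∀ c, (s₁ c).1.2 = c) →
        (∃ G : I × I → Y, Continuous G ∧
          (∀ u, G (u, 0) = s₀ (ell a b hab u)) ∧
          (∀ u, G (u, 1) = s₁ (ell a b hab u)) ∧
          (∀ t, ((G (0, t)).1.2 : ℝ) = a) ∧
          (∀ t, ((G (1, t)).1.2 : ℝ) = b)) →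
        ∃ F : Icc a b × I → Y, Continuous F ∧
          (∀ c, F (c, 0) = s₀ c) ∧
          (∀ c, F (c, 1) = s₁ c) ∧
          (∀ c t, (F (c, t)).1.2 = c)) := by
  simp only [IsZeroSectional, homotopicWith_iff_exists_prod_unitInterval,
    isRelativePath_Icc_iff hab, forall_and]
  refine and_congr ⟨fun h γ hγ h0 h1 => ?_, fun h γ hγ => ?_⟩
    ⟨fun h s₀ s₁ hs₀ h₀ hs₁ h₁ hG => ?_, fun h s₀ s₁ h₀ h₁ hG => ?_⟩
  · obtain ⟨s, hs, H, hH⟩ := h ⟨γ, hγ⟩ ⟨h0, h1⟩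
    exact ⟨s, s.continuous, hs, H, H.continuous, hH⟩
  · obtain ⟨s, hs, hsc, H, hH, hH'⟩ := h γ γ.continuous hγ.1 hγ.2
    exact ⟨⟨s, hs⟩, hsc, ⟨H, hH⟩, hH'⟩
  · obtain ⟨G, hG, hG'⟩ := hG
    obtain ⟨F, F0, F1, hF⟩ := h ⟨s₀, hs₀⟩ ⟨s₁, hs₁⟩ h₀ h₁ ⟨⟨G, hG⟩, hG'⟩
    exact ⟨F, F.continuous, F0, F1, fun c t => hF t c⟩
  · obtain ⟨G, hG⟩ := hG
    obtain ⟨F, hF, F0, F1, hFc⟩ := h s₀ s₁ s₀.continuous h₀ s₁.continuous h₁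
      ⟨G, G.continuous, hG⟩
    exact ⟨⟨F, hF⟩, F0, F1, fun t c => hFc c t⟩

end

theorem stmt9_general {Z C : Type*} [TopologicalSpace Z] [TopologicalSpace C] [Lattice C]
    [TopologicalLattice C] {x y : C} (hx : IsBot x) (hy : IsTop y) (ℓ : Path x y)
    (Y : Set (Z × C)) (hY : Monotone (fiber Y) ∨ Antitone (fiber Y)) : IsZeroSectional ℓ Y := by
  obtain hY | hY := hY
  · exact isZeroSectional_of_monotone hY hx hy ℓ
  · exact .of_symm <|
      isZeroSectional_of_monotone (C := Cᵒᵈ) hY.dual_left hy.toDual hx.toDual ℓ.symm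

/-- A subspace `Y ⊆ Z × [a,b]` whose fibers are constant except for a single jump at
`t₀ ∈ (a,b)` (either fibers `A ⊆ B` jumping up at `t₀` with the fiber over `t₀` equal
to `B`, or fibers `A ⊇ B` jumping down just after `t₀` with the fiber over `t₀` equal
to `A`) is 0-sectional: every relative path is homotopic through relative paths to
`s ∘ ℓ` for some section `s`, and any two sections whose associated relative paths are
homotopic through relative paths are homotopic through sections. -/
theorem stmt9 {Z : Type*} [TopologicalSpace Z] (a b : ℝ) (hab : a < b)
    (Y : Set (Z × Set.Icc a b))
    (t₀ : ℝ) (ht₀a : a < t₀) (ht₀b : t₀ < b)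
    (hstacked : ∃ A B : Set Z,
      (A ⊆ B ∧ (∀ c : Set.Icc a b, (c : ℝ) < t₀ → {z : Z | (z, c) ∈ Y} = A) ∧
        (∀ c : Set.Icc a b, t₀ ≤ (c : ℝ) → {z : Z | (z, c) ∈ Y} = B)) ∨
      (B ⊆ A ∧ (∀ c : Set.Icc a b, (c : ℝ) ≤ t₀ → {z : Z | (z, c) ∈ Y} = A) ∧
        (∀ c : Set.Icc a b, t₀ < (c : ℝ) → {z : Z | (z, c) ∈ Y} = B))) :
    (∀ γ : I → Y, Continuous γ →
      ((γ 0).1.2 : ℝ) = a → ((γ 1).1.2 : ℝ) = b →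
      ∃ s : Set.Icc a b → Y, Continuous s ∧ (∀ c, (s c).1.2 = c) ∧
        ∃ H : I × I → Y, Continuous H ∧
          (∀ u, H (u, 0) = γ u) ∧
          (∀ u, H (u, 1) = s (ell a b hab.le u)) ∧
          (∀ t, ((H (0, t)).1.2 : ℝ) = a) ∧
          (∀ t, ((H (1, t)).1.2 : ℝ) = b)) ∧
    (∀ s₀ s₁ : Set.Icc a b → Y,
      Continuous s₀ → (∀ c, (s₀ c).1.2 = c) →
      Continuous s₁ → (∀ c, (s₁ c).1.2 = c) →
      (∃ G : I × I → Y, Continuous G ∧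
        (∀ u, G (u, 0) = s₀ (ell a b hab.le u)) ∧
        (∀ u, G (u, 1) = s₁ (ell a b hab.le u)) ∧
        (∀ t, ((G (0, t)).1.2 : ℝ) = a) ∧
        (∀ t, ((G (1, t)).1.2 : ℝ) = b)) →
      ∃ F : Set.Icc a b × I → Y, Continuous F ∧
        (∀ c, F (c, 0) = s₀ c) ∧
        (∀ c, F (c, 1) = s₁ c) ∧
        (∀ c t, (F (c, t)).1.2 = c)) :=
  (isZeroSectional_ellPath_iff hab.le).1 <| stmt9_general (fun c => c.2.1) (fun c => c.2.2)
    (ellPath hab.le) Y (monotone_or_antitone_of_jump (Subtype.mono_coe _) hstacked)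
end
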